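/- arXiv:1610.06712 — 2 statements merged into one kernel-verified Lean document; each statement's English description precedes it below -/
import Mathlib

section
/- Let n ≥ 2 be an integer, let s₀, s₁ ∈ ℝⁿ with ‖s₁ − s₀‖ = 2√d for some d > 0, let r > √d, and let μ be the uniform (normalized rotation-invariant) probability measure on the sphere {y ∈ ℝⁿ : ‖y − s₀‖ = r}. Then μ({y : ‖y − s₁‖ ≤ ‖y − s₀‖}) = (Γ(n/2) / (√π · Γ((n−1)/2))) · ∫_0^{arccos(√d / r)} sin^{n−2}(φ) dφ. -/
open MeasureTheory Real

theorem aux_lintegral_norm {F : Type*} [NormedAddCommGroup F] [InnerProductSpace ℝ F]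
    [FiniteDimensional ℝ F] [MeasurableSpace F] [BorelSpace F] [Nontrivial F]
    (f : ℝ → ENNReal) (hf : Measurable f) :
    ∫⁻ w : F, f ‖w‖ = (Module.finrank ℝ F * volume (Metric.ball (0:F) 1)) *
      ∫⁻ y in Set.Ioi (0:ℝ), ENNReal.ofReal (y ^ (Module.finrank ℝ F - 1)) * f y := by
  calc
    ∫⁻ x : F, f (‖x‖) = ∫⁻ x : ({(0)}ᶜ : Set F), f (‖x.1‖) ∂((volume : Measure F).comap (Subtype.val)) := by
      rw [lintegral_subtype_comap (measurableSet_singleton _).compl (fun x : F ↦ f (‖x‖)),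
        restrict_compl_singleton]
    _ = ∫⁻ x, f x.2 ∂(volume : Measure F).toSphere.prod (.volumeIoiPow (Module.finrank ℝ F - 1)) := by
      simpa using (volume : Measure F).measurePreserving_homeomorphUnitSphereProd.lintegral_comp_emb
        (Homeomorph.measurableEmbedding _) (f ∘ Subtype.val ∘ Prod.snd)
    _ = (volume : Measure F).toSphere Set.univ * ∫⁻ x : Set.Ioi (0 : ℝ), f x ∂.volumeIoiPow (Module.finrank ℝ F - 1) := by
      rw [lintegral_prod _ (by fun_prop)]
      simp [mul_comm]
    _ = _ := by
      simp only [Measure.volumeIoiPow]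
      rw [lintegral_withDensity_eq_lintegral_mul _ (by fun_prop) (by fun_prop), Measure.toSphere_apply_univ]
      congr 1
      exact lintegral_subtype_comap measurableSet_Ioi (fun a : ℝ => ENNReal.ofReal (a ^ (Module.finrank ℝ F - 1)) * f a)

theorem aux_cone (m : ℕ) (hm : 1 ≤ m) (t : ℝ) (ht0 : 0 < t) (ht1 : t < 1) :
    ∫⁻ p : ℝ × EuclideanSpace ℝ (Fin m),
      (if t * √(p.1 ^ 2 + ‖p.2‖ ^ 2) ≤ p.1 then ENNReal.ofReal (exp (-(p.1 ^ 2 + ‖p.2‖ ^ 2))) else 0)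
    = ENNReal.ofReal (√π ^ m * Gamma (((m:ℝ) + 1) / 2) / Gamma ((m:ℝ)/2) *
        ∫ φ in (0:ℝ)..(arccos t), (sin φ) ^ (m - 1)) := by
  have : Nonempty (Fin m) := ⟨⟨0, hm⟩⟩
  set h : ℝ × ℝ → ENNReal := fun p =>
    if t * √(p.1 ^ 2 + p.2 ^ 2) ≤ p.1 then ENNReal.ofReal (exp (-(p.1 ^ 2 + p.2 ^ 2))) else 0 with hh
  have hmeas : Measurable h := by
    refine Measurable.ite (measurableSet_le (by fun_prop) (by fun_prop)) (by fun_prop) (by fun_prop)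
  set C : ENNReal := (Module.finrank ℝ (EuclideanSpace ℝ (Fin m)) * volume (Metric.ball (0:EuclideanSpace ℝ (Fin m)) 1)) with hC
  have hCv : C = ENNReal.ofReal (2 * √π ^ m / Gamma ((m:ℝ)/2)) := by
    rw [hC, EuclideanSpace.volume_ball]
    simp only [finrank_euclideanSpace, Fintype.card_fin, ENNReal.ofReal_one, one_pow, one_mul]
    rw [← ENNReal.ofReal_natCast, ← ENNReal.ofReal_mul (by positivity)]
    have hm' : (0:ℝ) < m := by exact_mod_cast hm
    rw [Real.Gamma_add_one (by positivity)]
    have := Real.Gamma_pos_of_pos (s := (m:ℝ)/2) (by positivity)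
    congr 1
    field_simp
  have hφ0 : 0 < arccos t := arccos_pos.2 ht1
  have hφ1 : arccos t < π / 2 := arccos_lt_pi_div_two.2 ht0
  calc _ = ∫⁻ p : ℝ × EuclideanSpace ℝ (Fin m), h (p.1, ‖p.2‖) := rfl
    _ = ∫⁻ x : ℝ, ∫⁻ w : EuclideanSpace ℝ (Fin m), h (x, ‖w‖) := by
      rw [Measure.volume_eq_prod, lintegral_prod _ (by fun_prop)]
    _ = ∫⁻ x : ℝ, C * ∫⁻ y in Set.Ioi (0:ℝ), ENNReal.ofReal (y ^ (m - 1)) * h (x, y) := by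
      refine lintegral_congr fun x => ?_
      rw [aux_lintegral_norm (fun y => h (x, y)) (by fun_prop)]
      simp [hC]
    _ = C * ∫⁻ p : ℝ × ℝ, (Set.Ioi (0:ℝ)).indicator (fun y => ENNReal.ofReal (y ^ (m - 1))) p.2 * h p := by
      rw [lintegral_const_mul' _ _ (by rw [hCv]; exact ENNReal.ofReal_ne_top)]
      rw [Measure.volume_eq_prod, lintegral_prod]
      · congr 1
        refine lintegral_congr fun x => ?_
        rw [← lintegral_indicator measurableSet_Ioi]
        refine lintegral_congr fun y => ?_
        by_cases hy : y ∈ Set.Ioi (0:ℝ) <;> simp [hy]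
      · refine AEMeasurable.mul (Measurable.aemeasurable ?_) hmeas.aemeasurable
        exact (Measurable.indicator (by fun_prop) measurableSet_Ioi).comp measurable_snd
    _ = C * ∫⁻ p in Set.Ioi (0:ℝ) ×ˢ Set.Ioo (-π) π, ENNReal.ofReal (p.1 ^ m * exp (- p.1 ^ 2)) *
          (Set.Ioc 0 (arccos t)).indicator (fun φ => ENNReal.ofReal ((sin φ) ^ (m - 1))) p.2 := by
      rw [← lintegral_comp_polarCoord_symm, polarCoord_target]
      congr 1
      refine setLIntegral_congr_fun (measurableSet_Ioi.prod measurableSet_Ioo) ?_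
      rintro ⟨q, φ⟩ ⟨hq, hφ⟩
      simp only [Set.mem_Ioi, Set.mem_Ioo] at hq hφ
      have e1 : (q * cos φ) ^ 2 + (q * sin φ) ^ 2 = q ^ 2 := by
        nlinarith [sin_sq_add_cos_sq φ]
      simp only [polarCoord_symm_apply, hh, e1, Real.sqrt_sq hq.le, smul_eq_mul]
      have e2 : (t * q ≤ q * cos φ) ↔ t ≤ cos φ := by
        rw [mul_comm t q]; exact mul_le_mul_iff_right₀ hq
      simp only [e2]
      by_cases hs : 0 < φ
      · have hsin : 0 < sin φ := sin_pos_of_pos_of_lt_pi hs hφ.2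
        have e3 : t ≤ cos φ ↔ φ ≤ arccos t := by
          constructor
          · intro hc
            have hc2 := arccos_le_arccos hc
            rwa [arccos_cos hs.le hφ.2.le] at hc2
          · intro hc
            have := cos_le_cos_of_nonneg_of_le_pi hs.le (arccos_le_pi t) hc
            rwa [cos_arccos (by linarith) ht1.le] at this
        by_cases h3 : φ ≤ arccos t
        · have h3' := e3.2 h3
          have hqs : 0 < q * sin φ := by positivity
          simp only [Set.indicator, Set.mem_Ioi, hqs, h3', h3, hs, Set.mem_Ioc, if_true, and_self]
          rw [← ENNReal.ofReal_mul (by positivity), ← ENNReal.ofReal_mul (by positivity), ← ENNReal.ofReal_mul (by positivity)]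
          congr 1
          obtain ⟨k, rfl⟩ : ∃ k, m = k + 1 := ⟨m - 1, by omega⟩
          simp only [Nat.add_sub_cancel]
          ring
        · have h3' := mt e3.1 h3
          simp [h3', h3]
      · have hsin : sin φ ≤ 0 := by
          apply sin_nonpos_of_nonpos_of_neg_pi_le <;> linarith
        have : ¬ (0 < q * sin φ) := by nlinarith
        simp [this, hs]
    _ = C * ((∫⁻ q in Set.Ioi (0:ℝ), ENNReal.ofReal (q ^ m * exp (- q ^ 2))) *
          ∫⁻ φ in Set.Ioo (-π) π, (Set.Ioc 0 (arccos t)).indicator (fun φ => ENNReal.ofReal ((sin φ) ^ (m - 1))) φ) := by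
      rw [Measure.volume_eq_prod, ← Measure.prod_restrict]
      rw [lintegral_prod_mul (f := fun q : ℝ => ENNReal.ofReal (q ^ m * exp (- q ^ 2)))
        (g := fun φ : ℝ => (Set.Ioc 0 (arccos t)).indicator (fun φ => ENNReal.ofReal ((sin φ) ^ (m - 1))) φ)]
      · fun_prop
      · exact (Measurable.indicator (by fun_prop) measurableSet_Ioc).aemeasurable
    _ = C * (ENNReal.ofReal (1 / 2 * Gamma (((m:ℝ) + 1) / 2)) *
          ENNReal.ofReal (∫ φ in (0:ℝ)..(arccos t), (sin φ) ^ (m - 1))) := by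
      congr 2
      · have e : ∫ q in Set.Ioi (0:ℝ), q ^ m * exp (- q ^ 2) = 1 / 2 * Gamma (((m:ℝ) + 1) / 2) := by
          have := integral_rpow_mul_exp_neg_rpow (p := 2) (q := m) (by norm_num) (by linarith [Nat.cast_nonneg (α := ℝ) m])
          rw [← this]
          norm_cast
        have hpos : 0 < 1 / 2 * Gamma (((m:ℝ) + 1) / 2) :=
          mul_pos (by norm_num) (Real.Gamma_pos_of_pos (by positivity))
        rw [← e, ofReal_integral_eq_lintegral_ofReal]
        · exact Integrable.of_integral_ne_zero (by rw [e]; exact hpos.ne')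
        · filter_upwards [ae_restrict_mem measurableSet_Ioi] with x hx
          have : 0 < x := hx
          positivity
      · rw [lintegral_indicator measurableSet_Ioc, Measure.restrict_restrict measurableSet_Ioc,
          (Set.inter_eq_left (s := Set.Ioc 0 (arccos t)) (t := Set.Ioo (-π) π)).2 (fun x hx => ⟨by linarith [hx.1, pi_pos], by linarith [hx.2, pi_pos]⟩),
          intervalIntegral.integral_of_le hφ0.le, ofReal_integral_eq_lintegral_ofReal]
        · exact (Continuous.integrableOn_Ioc (by fun_prop))
        · filter_upwards [ae_restrict_mem measurableSet_Ioc] with x hx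
          have : 0 < sin x := sin_pos_of_pos_of_lt_pi hx.1 (by linarith [hx.2, pi_pos])
          positivity
    _ = _ := by
      have hm' : (0:ℝ) < m := by exact_mod_cast hm
      have := Real.Gamma_pos_of_pos (s := (m:ℝ)/2) (by positivity)
      have := Real.Gamma_pos_of_pos (s := ((m:ℝ)+1)/2) (by positivity)
      rw [hCv, ← ENNReal.ofReal_mul (by positivity), ← ENNReal.ofReal_mul (by positivity)]
      congr 1
      ring

theorem aux_total {E : Type*} [NormedAddCommGroup E] [InnerProductSpace ℝ E]
    [FiniteDimensional ℝ E] [MeasurableSpace E] [BorelSpace E] :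
    ∫⁻ v : E, ENNReal.ofReal (exp (-‖v‖ ^ 2)) = ENNReal.ofReal (√π ^ (Module.finrank ℝ E)) := by
  have e : ∫ v : E, exp (-‖v‖ ^ 2) = √π ^ (Module.finrank ℝ E) := by
    have := GaussianFourier.integral_rexp_neg_mul_sq_norm (V := E) (b := 1) one_pos
    simp only [neg_mul, one_mul, div_one] at this
    rw [this, Real.sqrt_eq_rpow, ← Real.rpow_natCast, ← Real.rpow_mul pi_pos.le]
    congr 1; ring
  rw [← e, ofReal_integral_eq_lintegral_ofReal]
  · exact Integrable.of_integral_ne_zero (by rw [e]; positivity)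
  · exact .of_forall fun x => (exp_pos _).le

theorem aux_iso {E : Type*} [NormedAddCommGroup E] [InnerProductSpace ℝ E]
    (a b : E) (h : ‖a‖ = ‖b‖) : ∃ O : E ≃ₗᵢ[ℝ] E, O a = b :=
  ⟨_, Submodule.reflection_sub h⟩

/-- Gaussian measure of a cone. -/
theorem aux_cone' (m : ℕ) (hm : 1 ≤ m) (t : ℝ) (ht0 : 0 < t) (ht1 : t < 1)
    (y : EuclideanSpace ℝ (Fin (m + 1))) (r : ℝ) (hr : 0 < r) (hy : ‖y‖ = r) :
    ∫⁻ v : EuclideanSpace ℝ (Fin (m + 1)),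
      (if t * r * ‖v‖ ≤ inner ℝ y v then ENNReal.ofReal (exp (-‖v‖ ^ 2)) else 0)
    = ENNReal.ofReal (√π ^ m * Gamma (((m:ℝ) + 1) / 2) / Gamma ((m:ℝ)/2) *
        ∫ φ in (0:ℝ)..(arccos t), (sin φ) ^ (m - 1)) := by
  let F := EuclideanSpace ℝ (Fin m)
  let G := WithLp 2 (ℝ × F)
  have hfr : Module.finrank ℝ (EuclideanSpace ℝ (Fin (m+1))) = Module.finrank ℝ G := by
    rw [(WithLp.linearEquiv 2 ℝ (ℝ × F)).finrank_eq]
    simp [F, add_comm]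
  let J : EuclideanSpace ℝ (Fin (m+1)) ≃ₗᵢ[ℝ] G := (stdOrthonormalBasis ℝ _).equiv (stdOrthonormalBasis ℝ G) (finCongr hfr)
  let e : G := WithLp.toLp 2 (r, 0)
  have he : ‖J y‖ = ‖e‖ := by
    rw [J.norm_map, hy, WithLp.prod_norm_eq_of_L2]
    simp [e, abs_of_pos hr, Real.sqrt_sq hr.le]
  obtain ⟨O, hO⟩ := aux_iso (J y) e he
  let K := J.trans O
  rw [← aux_cone m hm t ht0 ht1]
  rw [← (WithLp.volume_preserving_ofLp ℝ F).lintegral_comp_emb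
    (MeasurableEquiv.toLp 2 (ℝ × F)).symm.measurableEmbedding]
  rw [← K.measurePreserving.lintegral_comp_emb K.toHomeomorph.measurableEmbedding]
  refine lintegral_congr fun v => ?_
  have h1 : ‖v‖ ^ 2 = (K v).fst ^ 2 + ‖(K v).snd‖ ^ 2 := by
    rw [← K.norm_map v, WithLp.prod_norm_sq_eq_of_L2]; simp
  have h2 : inner ℝ y v = r * (K v).fst := by
    rw [← K.inner_map_map y v]
    have : K y = e := hO
    rw [this, WithLp.prod_inner_apply]
    simp [e, mul_comm]
  have h3 : ‖v‖ = √((K v).fst ^ 2 + ‖(K v).snd‖ ^ 2) := by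
    rw [← h1, Real.sqrt_sq (norm_nonneg _)]
  have h4 : t * r * ‖v‖ ≤ inner ℝ y v ↔ t * √((K v).fst ^ 2 + ‖(K v).snd‖ ^ 2) ≤ (K v).fst := by
    rw [h2, ← h3, show t * r * ‖v‖ = r * (t * ‖v‖) by ring]
    exact mul_le_mul_iff_right₀ hr
  simp only [h4, h1]
  rfl

theorem aux_cap_set {E : Type*} [NormedAddCommGroup E] [InnerProductSpace ℝ E]
    (z u : E) (d : ℝ) (hd : 0 < d) (hu : ‖u‖ = 2 * √d) :
    ‖z - u‖ ≤ ‖z‖ ↔ √d * ‖u‖ ≤ inner ℝ z u := by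
  rw [← sq_le_sq₀ (norm_nonneg _) (norm_nonneg _), norm_sub_sq_real, hu]
  have := Real.sq_sqrt hd.le
  constructor <;> intro h <;> nlinarith

theorem stmt_6 (n : ℕ) (hn : 2 ≤ n) (d : ℝ) (hd : 0 < d) (r : ℝ) (hr : Real.sqrt d < r)
    (s₀ s₁ : EuclideanSpace ℝ (Fin n)) (hdist : ‖s₁ - s₀‖ = 2 * Real.sqrt d)
    (μ : Measure (EuclideanSpace ℝ (Fin n))) [IsProbabilityMeasure μ]
    (hsupp : μ (Metric.sphere s₀ r) = 1)
    (hinv : ∀ O : EuclideanSpace ℝ (Fin n) ≃ₗᵢ[ℝ] EuclideanSpace ℝ (Fin n),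
      μ.map (fun y => s₀ + O (y - s₀)) = μ) :
    (μ {y | ‖y - s₁‖ ≤ ‖y - s₀‖}).toReal =
      (Real.Gamma ((n : ℝ) / 2) / (Real.sqrt π * Real.Gamma (((n : ℝ) - 1) / 2))) *
        ∫ φ in (0:ℝ)..(Real.arccos (Real.sqrt d / r)), (Real.sin φ) ^ (n - 2) := by
  obtain ⟨m, rfl⟩ : ∃ m, n = m + 1 := ⟨n - 1, by omega⟩
  have hm : 1 ≤ m := by omega
  have hd' : 0 < √d := Real.sqrt_pos.2 hd
  have hr0 : 0 < r := hd'.trans hr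
  set u := s₁ - s₀ with hu
  have hu0 : 0 < ‖u‖ := by rw [hdist]; positivity
  have hset : {y | ‖y - s₁‖ ≤ ‖y - s₀‖} = {y | √d * ‖u‖ ≤ inner ℝ (y - s₀) u} := by
    ext y
    have := aux_cap_set (y - s₀) u d hd hdist
    rw [hu, sub_sub_sub_cancel_right, ← hu] at this
    exact this
  rw [hset]
  set P := μ {y | √d * ‖u‖ ≤ inner ℝ (y - s₀) u} with hP
  have hsame : ∀ v : EuclideanSpace ℝ (Fin (m + 1)), v ≠ 0 →
      μ {y | √d * ‖v‖ ≤ inner ℝ (y - s₀) v} = P := by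
    intro v hv
    have hv0 : 0 < ‖v‖ := norm_pos_iff.2 hv
    obtain ⟨O, hO⟩ := aux_iso ((‖v‖ / ‖u‖) • u) v (by
      rw [norm_smul, Real.norm_of_nonneg (by positivity)]; field_simp)
    have hms : MeasurableSet {y : EuclideanSpace ℝ (Fin (m + 1)) | √d * ‖v‖ ≤ inner ℝ (y - s₀) v} :=
      measurableSet_le (by fun_prop) (by fun_prop)
    have hmO : Measurable (fun y => s₀ + O (y - s₀)) := by
      have := O.continuous
      exact Continuous.measurable (by fun_prop)
    rw [hP]
    conv_lhs => rw [← hinv O, Measure.map_apply hmO hms]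
    congr 1
    ext y
    simp only [Set.mem_preimage, Set.mem_ofPred_eq, add_sub_cancel_left]
    have e : inner ℝ (O (y - s₀)) v = ‖v‖ / ‖u‖ * inner ℝ (y - s₀) u := by
      conv_lhs => rw [← hO]
      rw [O.inner_map_map, inner_smul_right]
    rw [e, div_mul_eq_mul_div, le_div_iff₀ hu0,
      show √d * ‖v‖ * ‖u‖ = ‖v‖ * (√d * ‖u‖) by ring]
    exact mul_le_mul_iff_right₀ hv0
  set t := √d / r with ht
  have ht0 : 0 < t := by positivity
  have ht1 : t < 1 := (div_lt_one hr0).2 hr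
  have htr : t * r = √d := by rw [ht]; field_simp
  have hae : ∀ᵐ y ∂μ, ‖y - s₀‖ = r := by
    have : ∀ᵐ y ∂μ, y ∈ Metric.sphere s₀ r :=
      (mem_ae_iff_prob_eq_one Metric.isClosed_sphere.measurableSet).2 hsupp
    filter_upwards [this] with y hy
    simpa [dist_eq_norm] using hy
  let f : EuclideanSpace ℝ (Fin (m + 1)) → EuclideanSpace ℝ (Fin (m + 1)) → ENNReal := fun y v =>
    if √d * ‖v‖ ≤ inner ℝ (y - s₀) v then ENNReal.ofReal (exp (-‖v‖ ^ 2)) else 0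
  have hfm : Measurable (Function.uncurry f) := by
    refine Measurable.ite (measurableSet_le (by fun_prop) (by fun_prop)) (by fun_prop) (by fun_prop)
  have hswap := lintegral_lintegral_swap (μ := μ) (ν := (volume : Measure (EuclideanSpace ℝ (Fin (m + 1)))))
    hfm.aemeasurable
  have hL : ∫⁻ y, ∫⁻ v, f y v ∂volume ∂μ = ENNReal.ofReal (√π ^ m * Gamma (((m:ℝ) + 1) / 2) / Gamma ((m:ℝ)/2) *
        ∫ φ in (0:ℝ)..(arccos t), (sin φ) ^ (m - 1)) := by
    rw [lintegral_congr_ae (g := fun _ => ENNReal.ofReal (√π ^ m * Gamma (((m:ℝ) + 1) / 2) / Gamma ((m:ℝ)/2) *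
        ∫ φ in (0:ℝ)..(arccos t), (sin φ) ^ (m - 1)))]
    · simp
    · filter_upwards [hae] with y hy
      rw [← aux_cone' m hm t ht0 ht1 (y - s₀) r hr0 hy, htr]
  have hR : ∫⁻ v, ∫⁻ y, f y v ∂μ ∂volume = P * ENNReal.ofReal (√π ^ (m + 1)) := by
    have := aux_total (E := EuclideanSpace ℝ (Fin (m + 1)))
    rw [finrank_euclideanSpace, Fintype.card_fin] at this
    rw [← this, ← lintegral_const_mul' _ _ (measure_ne_top μ _)]
    have hne : ∀ᵐ v : EuclideanSpace ℝ (Fin (m + 1)), v ≠ 0 := by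
      simp [ae_iff]
    refine lintegral_congr_ae ?_
    filter_upwards [hne] with v hv
    have hms : MeasurableSet {y : EuclideanSpace ℝ (Fin (m + 1)) | √d * ‖v‖ ≤ inner ℝ (y - s₀) v} :=
      measurableSet_le (by fun_prop) (by fun_prop)
    change _ = P * _
    rw [← hsame v hv, mul_comm, ← lintegral_indicator_const hms]
    rfl
  rw [hL, hR] at hswap
  have hreal := congrArg ENNReal.toReal hswap
  have hm' : (0:ℝ) < m := by exact_mod_cast hm
  have hg1 := Real.Gamma_pos_of_pos (s := (m:ℝ)/2) (by positivity)
  have hg2 := Real.Gamma_pos_of_pos (s := ((m:ℝ)+1)/2) (by positivity)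
  have hI : 0 ≤ ∫ φ in (0:ℝ)..(arccos t), (sin φ) ^ (m - 1) := by
    refine intervalIntegral.integral_nonneg (arccos_nonneg t) fun x hx => ?_
    exact pow_nonneg (sin_nonneg_of_nonneg_of_le_pi hx.1 (hx.2.trans (arccos_le_pi t))) _
  rw [ENNReal.toReal_mul, ENNReal.toReal_ofReal (by positivity), ENNReal.toReal_ofReal (by positivity)] at hreal
  have hmm : m + 1 - 2 = m - 1 := by omega
  have hpi : 0 < √π := Real.sqrt_pos.2 pi_pos
  push_cast
  rw [add_sub_cancel_right, eq_comm]
  try rw [hmm]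
  set I := ∫ φ in (0:ℝ)..(arccos t), (sin φ) ^ (m - 1)
  have hp : √π ^ (m + 1) ≠ 0 := by positivity
  apply mul_right_cancel₀ hp
  rw [← hreal]
  field_simp
  ring
end

section
/- Let n ≥ 1 be an integer, s₀ ∈ ℝⁿ, and let S ⊆ ℝⁿ be a set with s₀ ∉ S. Define the error region E = {y ∈ ℝⁿ : ∃ s ∈ S, ‖y − s‖ ≤ ‖y − s₀‖}. For r > 0 let μ_r denote the uniform (normalized rotation-invariant) probability measure on the sphere {y ∈ ℝⁿ : ‖y − s₀‖ = r}. Then (i) for any 0 < r ≤ r', the dilation y ↦ s₀ + (r'/r)(y − s₀) maps E ∩ {y : ‖y − s₀‖ = r} into E ∩ {y : ‖y − s₀‖ = r'}, and (ii) the function r ↦ μ_r(E) is nondecreasing on (0, ∞). -/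
open MeasureTheory

/-- The characteristic function of an isometry-invariant measure is radial. -/
lemma charFun_radial {n : ℕ} (μ : Measure (EuclideanSpace ℝ (Fin n)))
    (hinv : ∀ O : EuclideanSpace ℝ (Fin n) ≃ₗᵢ[ℝ] EuclideanSpace ℝ (Fin n), μ.map O = μ)
    (t u : EuclideanSpace ℝ (Fin n)) (h : ‖t‖ = ‖u‖) : charFun μ t = charFun μ u := by
  set O := (Submodule.span ℝ {t - u})ᗮ.reflection with hO
  have hOt : O t = u := Submodule.reflection_sub h
  have h1 : charFun μ u = charFun (μ.map O) u := by rw [hinv O]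
  rw [h1, charFun_apply, charFun_apply,
    integral_map O.continuous.measurable.aemeasurable (by fun_prop)]
  refine integral_congr_ae (Filter.Eventually.of_forall fun x => ?_)
  have : inner ℝ (O x) u = inner ℝ x t := by
    rw [← hOt]; exact O.inner_map_map x t
  simp only [this]

/-- Uniqueness of the invariant probability measure on the unit sphere. -/
lemma invariant_unique {n : ℕ} (μ ν : Measure (EuclideanSpace ℝ (Fin n)))
    [IsProbabilityMeasure μ] [IsProbabilityMeasure ν]
    (hμ : ∀ O : EuclideanSpace ℝ (Fin n) ≃ₗᵢ[ℝ] EuclideanSpace ℝ (Fin n), μ.map O = μ)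
    (hν : ∀ O : EuclideanSpace ℝ (Fin n) ≃ₗᵢ[ℝ] EuclideanSpace ℝ (Fin n), ν.map O = ν)
    (sμ : ∀ᵐ x ∂μ, ‖x‖ = 1) (sν : ∀ᵐ x ∂ν, ‖x‖ = 1) : μ = ν := by
  apply Measure.ext_of_charFun
  funext t
  have key : ∀ (α β : Measure (EuclideanSpace ℝ (Fin n))) [IsProbabilityMeasure β],
      (∀ O : EuclideanSpace ℝ (Fin n) ≃ₗᵢ[ℝ] EuclideanSpace ℝ (Fin n), α.map O = α) →
      (∀ᵐ x ∂β, ‖x‖ = 1) → charFun α t = ∫ x, charFun α (‖t‖ • x) ∂β := by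
    intro α β _ hα sβ
    have : ∫ x, charFun α (‖t‖ • x) ∂β = ∫ x, charFun α t ∂β := by
      refine integral_congr_ae ?_
      filter_upwards [sβ] with x hx
      exact charFun_radial α hα _ _ (by simp [norm_smul, hx])
    rw [this]; simp
  rw [key μ ν hμ sν, key ν μ hν sμ]
  simp only [charFun_apply]
  rw [integral_integral_swap]
  · refine integral_congr_ae (Filter.Eventually.of_forall fun x => ?_)
    refine integral_congr_ae (Filter.Eventually.of_forall fun y => ?_)
    simp only [inner_smul_right, real_inner_comm]
  · refine Integrable.of_bound (C := 1) (Continuous.aestronglyMeasurable ?_)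
      (Filter.Eventually.of_forall fun x => ?_)
    · simp only [Function.uncurry_def]; fun_prop
    · simp only [Function.uncurry_def]
      rw [Complex.norm_exp_ofReal_mul_I]

theorem stmt_18 (n : ℕ) (hn : 1 ≤ n)
    (s₀ : EuclideanSpace ℝ (Fin n)) (S : Set (EuclideanSpace ℝ (Fin n))) (hS : s₀ ∉ S)
    (E : Set (EuclideanSpace ℝ (Fin n)))
    (hE : E = {y | ∃ s ∈ S, ‖y - s‖ ≤ ‖y - s₀‖})
    (μ : ℝ → Measure (EuclideanSpace ℝ (Fin n)))
    (hprob : ∀ r : ℝ, 0 < r → IsProbabilityMeasure (μ r))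
    (hsupp : ∀ r : ℝ, 0 < r → μ r (Metric.sphere s₀ r) = 1)
    (hinv : ∀ r : ℝ, 0 < r →
      ∀ O : EuclideanSpace ℝ (Fin n) ≃ₗᵢ[ℝ] EuclideanSpace ℝ (Fin n),
        (μ r).map (fun y => s₀ + O (y - s₀)) = μ r) :
    (∀ r r' : ℝ, 0 < r → r ≤ r' →
      ∀ y ∈ E ∩ Metric.sphere s₀ r,
        s₀ + (r' / r) • (y - s₀) ∈ E ∩ Metric.sphere s₀ r') ∧
    (∀ r r' : ℝ, 0 < r → r ≤ r' → μ r E ≤ μ r' E) := by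
  have part1 : ∀ r r' : ℝ, 0 < r → r ≤ r' →
      ∀ y ∈ E ∩ Metric.sphere s₀ r,
        s₀ + (r' / r) • (y - s₀) ∈ E ∩ Metric.sphere s₀ r' := by
    rintro r r' hr hrr y ⟨hy, hyr⟩
    have hk : 1 ≤ r' / r := (one_le_div hr).2 hrr
    rw [mem_sphere_iff_norm] at hyr
    refine ⟨?_, ?_⟩
    · rw [hE] at hy ⊢
      obtain ⟨s, hs, h⟩ := hy
      refine ⟨s, hs, ?_⟩
      have e : s₀ + (r' / r) • (y - s₀) - s = (r' / r - 1) • (y - s₀) + (y - s) := by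
        module
      rw [e, add_sub_cancel_left]
      refine (norm_add_le _ _).trans ?_
      rw [norm_smul, norm_smul, Real.norm_of_nonneg (by linarith),
        Real.norm_of_nonneg (by linarith)]
      linarith
    · rw [mem_sphere_iff_norm, add_sub_cancel_left, norm_smul, hyr,
        Real.norm_of_nonneg (by linarith)]
      field_simp
  refine ⟨part1, ?_⟩
  intro r r' hr hrr
  have hr' : 0 < r' := hr.trans_le hrr
  have hae : ∀ ρ : ℝ, 0 < ρ → ∀ᵐ y ∂(μ ρ), y ∈ Metric.sphere s₀ ρ := by
    intro ρ hρ
    have := hprob ρ hρ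
    exact (mem_ae_iff_prob_eq_one Metric.isClosed_sphere.measurableSet).2 (hsupp ρ hρ)
  -- normalisation to the unit sphere
  let T : ∀ ρ : ℝ, EuclideanSpace ℝ (Fin n) → EuclideanSpace ℝ (Fin n) :=
    fun ρ y => ρ⁻¹ • (y - s₀)
  have hTm : ∀ ρ, Measurable (T ρ) := fun ρ => by
    have : Continuous (T ρ) := by dsimp only [T]; fun_prop
    exact this.measurable
  have hN1 : ∀ ρ : ℝ, 0 < ρ → IsProbabilityMeasure ((μ ρ).map (T ρ)) := fun ρ hρ => by
    have := hprob ρ hρ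
    exact Measure.isProbabilityMeasure_map (hTm ρ).aemeasurable
  have hN2 : ∀ ρ : ℝ, 0 < ρ → ∀ᵐ x ∂((μ ρ).map (T ρ)), ‖x‖ = 1 := fun ρ hρ => by
    rw [ae_map_iff (hTm ρ).aemeasurable (measurableSet_eq_fun (by fun_prop) (by fun_prop))]
    filter_upwards [hae ρ hρ] with y hy
    rw [mem_sphere_iff_norm] at hy
    simp only [T, norm_smul, hy, norm_inv, Real.norm_of_nonneg hρ.le]
    exact inv_mul_cancel₀ hρ.ne'
  have hN3 : ∀ ρ : ℝ, 0 < ρ → ∀ O : EuclideanSpace ℝ (Fin n) ≃ₗᵢ[ℝ] EuclideanSpace ℝ (Fin n),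
      ((μ ρ).map (T ρ)).map O = (μ ρ).map (T ρ) := fun ρ hρ O => by
    have hm : Measurable (fun y => s₀ + O (y - s₀)) := by
      have : Continuous (fun y => s₀ + O (y - s₀)) := by fun_prop
      exact this.measurable
    conv_rhs => rw [← hinv ρ hρ O]
    rw [Measure.map_map O.continuous.measurable (hTm ρ), Measure.map_map (hTm ρ) hm]
    congr 1
    funext y
    simp [T]
  have := hN1 r hr
  have := hN1 r' hr'
  have heq := invariant_unique _ _ (hN3 r hr) (hN3 r' hr') (hN2 r hr) (hN2 r' hr')
  have hval : ∀ ρ : ℝ, 0 < ρ → μ ρ E = (μ ρ).map (T ρ) {u | s₀ + ρ • u ∈ E} := fun ρ hρ => by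
    let e : EuclideanSpace ℝ (Fin n) ≃ₜ EuclideanSpace ℝ (Fin n) :=
      (Homeomorph.subRight s₀).trans (Homeomorph.smulOfNeZero ρ⁻¹ (inv_ne_zero hρ.ne'))
    have h := e.toMeasurableEquiv.map_apply (μ := μ ρ) {u | s₀ + ρ • u ∈ E}
    have h2 : (e.toMeasurableEquiv : _ → _) = T ρ := rfl
    rw [h2] at h
    rw [h]
    congr 1
    ext y
    simp [T, smul_smul, mul_inv_cancel₀ hρ.ne']
  rw [hval r hr, hval r' hr', ← heq]
  refine measure_mono_ae ?_
  filter_upwards [hN2 r hr] with u hu hmem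
  have h := (part1 r r' hr hrr (s₀ + r • u) ⟨hmem, by
    rw [mem_sphere_iff_norm, add_sub_cancel_left, norm_smul, hu, Real.norm_of_nonneg hr.le,
      mul_one]⟩).1
  rw [add_sub_cancel_left, smul_smul, div_mul_cancel₀ _ hr.ne'] at h
  exact h
end
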